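/- Let m ≥ r ≥ 2 and k ≥ 1 be integers and let F_1, …, F_k be nondegenerate r-graphs, each on at most m vertices. Suppose there exists c > 0 such that for every i ∈ [k] and all sufficiently large n: (a) F_i is (c·C(n,r−1), ((1−π(F_i))/(4m))·C(n,r−1))-bounded, and (b) ex(n,F_i) is ((1−π(F_i))/(8m))·C(n,r−1)-smooth. Let ε := min{ c/(4erm), (1−π(F_1))/(64rm²), …, (1−π(F_k))/(64rm²) }. Then there exists N_0 such that for all integers n ≥ N_0 and all t_1, …, t_k ∈ ℕ with t+1 := t_1 + ⋯ + t_k ≤ ε·n, one has ex(n, ⊔_{i=1}^k t_i F_i) ≤ C(n,r) − C(n−t,r) + max_{i∈[k]} ex(n−t, F_i); moreover, if max_{i∈[k]} ex(n−t, F_i) = ex(n−t, {F_1,…,F_k}), then equality holds. -/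

import Mathlib

open Filter

namespace DensityCH

/-- An `r`-uniform hypergraph with vertices in `ℕ`:
a finite vertex set together with a set of `r`-element edges. -/
structure HGraph (r : ℕ) where
  verts : Finset ℕ
  edges : Finset (Finset ℕ)
  edges_sub : ∀ e ∈ edges, e ⊆ verts
  edges_card : ∀ e ∈ edges, e.card = r

namespace HGraph

/-- Build an `r`-graph from a vertex set and a set of candidate edges,
keeping exactly the well-formed candidates. -/
def ofEdges (r : ℕ) (V : Finset ℕ) (E : Finset (Finset ℕ)) : HGraph r where
  verts := V
  edges := E.filter fun e => e ⊆ V ∧ e.card = r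
  edges_sub := fun e he => ((Finset.mem_filter.mp he).2).1
  edges_card := fun e he => ((Finset.mem_filter.mp he).2).2

variable {r : ℕ}

/-- `H` contains a copy of `F`, i.e. a subgraph isomorphic to `F`. -/
def IsCopyIn (F H : HGraph r) : Prop :=
  ∃ f : ℕ → ℕ, Set.InjOn f ↑F.verts ∧ (∀ v ∈ F.verts, f v ∈ H.verts) ∧
    ∀ e ∈ F.edges, e.image f ∈ H.edges

/-- The subgraph of `H` induced on `S`. -/
def induce (H : HGraph r) (S : Finset ℕ) : HGraph r :=
  ofEdges r (H.verts ∩ S) (H.edges.filter fun e => e ⊆ S)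

/-- Delete a vertex from `H`. -/
def deleteVert (H : HGraph r) (v : ℕ) : HGraph r :=
  ofEdges r (H.verts.erase v) (H.edges.filter fun e => v ∉ e)

/-- The degree of a vertex. -/
def deg (H : HGraph r) (v : ℕ) : ℕ := (H.edges.filter fun e => v ∈ e).card

/-- The maximum degree `Δ(H)`. -/
def maxDeg (H : HGraph r) : ℕ := H.verts.sup H.deg

/-- The minimum degree `δ(H)`. -/
def minDeg (H : HGraph r) : ℕ :=
  if h : H.verts.Nonempty then H.verts.inf' h H.deg else 0

/-- The average degree `d(H) = r·|E(H)|/|V(H)|`. -/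
noncomputable def avgDeg (H : HGraph r) : ℝ :=
  (r : ℝ) * (H.edges.card : ℝ) / (H.verts.card : ℝ)

/-- `H` contains `k` pairwise vertex-disjoint copies of `F`, i.e. `ν(F,H) ≥ k`. -/
def HasMatching (F H : HGraph r) (k : ℕ) : Prop :=
  ∃ S : Fin k → Finset ℕ,
    (∀ i, S i ⊆ H.verts ∧ (S i).card = F.verts.card) ∧
    (∀ i j, i ≠ j → Disjoint (S i) (S j)) ∧
    ∀ i, F.IsCopyIn (H.induce (S i))

/-- Isomorphism of hypergraphs. -/
def Iso (G H : HGraph r) : Prop :=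
  ∃ f : ℕ → ℕ, Set.BijOn f ↑G.verts ↑H.verts ∧
    ∀ e ∈ Finset.powersetCard r G.verts, (e ∈ G.edges ↔ e.image f ∈ H.edges)

/-- The join `G ⋈ H`: all edges of `G`, all edges of `H`, and all `r`-sets meeting
both vertex sets. -/
def join (G H : HGraph r) : HGraph r :=
  ofEdges r (G.verts ∪ H.verts)
    (G.edges ∪ H.edges ∪ ((Finset.powersetCard r (G.verts ∪ H.verts)).filter
      fun e => (e ∩ G.verts).Nonempty ∧ (e ∩ H.verts).Nonempty))

end HGraph

/-- The complete `r`-graph on a vertex set `S`. -/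
def completeOn (r : ℕ) (S : Finset ℕ) : HGraph r :=
  HGraph.ofEdges r S (Finset.powersetCard r S)

/-- The `r`-graph on `V` with no edges. -/
def emptyOn (r : ℕ) (V : Finset ℕ) : HGraph r := HGraph.ofEdges r V ∅

/-- The Turán number `ex(n,F)`. -/
noncomputable def exN (r n : ℕ) (F : HGraph r) : ℕ :=
  sSup {m | ∃ H : HGraph r, H.verts.card = n ∧ ¬ F.IsCopyIn H ∧ H.edges.card = m}

/-- `d(n,F) = r·ex(n,F)/n`. -/
noncomputable def dN (r n : ℕ) (F : HGraph r) : ℝ := (r : ℝ) * (exN r n F : ℝ) / (n : ℝ)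

/-- `δ(n,F) = ex(n,F) − ex(n−1,F)` (as a real number). -/
noncomputable def deltaN (r n : ℕ) (F : HGraph r) : ℝ := (exN r n F : ℝ) - (exN r (n-1) F : ℝ)

/-- `x` is the Turán density `π(F)`, i.e. the limit of `ex(n,F)/C(n,r)`. -/
def HasTuranDensity (r : ℕ) (F : HGraph r) (x : ℝ) : Prop :=
  Tendsto (fun n : ℕ => (exN r n F : ℝ) / (n.choose r : ℝ)) atTop (nhds x)

/-- `ex(n,(t+1)F)`: the maximum number of edges of an `n`-vertex `r`-graph with no
`t+1` pairwise vertex-disjoint copies of `F`. -/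
noncomputable def exMatchN (r n t : ℕ) (F : HGraph r) : ℕ :=
  sSup {m | ∃ H : HGraph r, H.verts.card = n ∧ ¬ F.HasMatching H (t+1) ∧ H.edges.card = m}

/-- `H ∈ EX(n,F)`. -/
def IsExtremalFree (r n : ℕ) (F H : HGraph r) : Prop :=
  H.verts.card = n ∧ ¬ F.IsCopyIn H ∧ H.edges.card = exN r n F

/-- `H ∈ EX(n,(t+1)F)`. -/
def IsExtremalMatchingFree (r n t : ℕ) (F H : HGraph r) : Prop :=
  H.verts.card = n ∧ ¬ F.HasMatching H (t+1) ∧ H.edges.card = exMatchN r n t F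

/-- `F` is `(f1, f2)`-bounded at `n`. -/
def BoundedAt (r n : ℕ) (F : HGraph r) (f1 f2 : ℝ) : Prop :=
  ∀ H : HGraph r, H.verts.card = n → ¬ F.IsCopyIn H →
    dN r n F - f1 ≤ H.avgDeg → (H.maxDeg : ℝ) ≤ dN r n F + f2

/-- `ex(·,F)` is `g`-smooth at `n`: `|δ(n,F) − d(n−1,F)| ≤ g(n)`. -/
def SmoothAt (r n : ℕ) (F : HGraph r) (g : ℝ) : Prop :=
  |deltaN r n F - dN r (n-1) F| ≤ g

/-- The collection `H 0, …, H t` (on a common vertex set) has a rainbow `F`-matching. -/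
def HasRainbowMatching (r t : ℕ) (F : HGraph r) (H : Fin (t+1) → HGraph r) : Prop :=
  ∃ S : Fin (t+1) → Finset ℕ,
    (∀ i, S i ⊆ (H i).verts ∧ (S i).card = F.verts.card) ∧
    (∀ i j, i ≠ j → Disjoint (S i) (S j)) ∧
    ∀ i, F.IsCopyIn ((H i).induce (S i))

/-!  Patterns -/

/-- An `r`-uniform pattern: a finite index set together with a collection of
`r`-multisets on it. -/
structure Pattern (r : ℕ) where
  idx : Finset ℕ
  mE : Finset (Multiset ℕ)
  card_eq : ∀ s ∈ mE, Multiset.card s = r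
  mem_idx : ∀ s ∈ mE, ∀ i ∈ s, i ∈ idx

namespace Pattern

variable {r : ℕ}

/-- The pattern `P − i`. -/
def erase (P : Pattern r) (i : ℕ) : Pattern r where
  idx := P.idx.erase i
  mE := P.mE.filter fun s => i ∉ s
  card_eq := fun s hs => P.card_eq s (Finset.mem_filter.mp hs).1
  mem_idx := by
    intro s hs j hj
    have h1 := Finset.mem_filter.mp hs
    refine Finset.mem_erase.mpr ⟨?_, P.mem_idx s h1.1 j hj⟩
    rintro rfl
    exact h1.2 hj

/-- `H` is a `P`-construction: a blowup of the pattern `P`. -/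
def IsConstruction (P : Pattern r) (H : HGraph r) : Prop :=
  ∃ part : ℕ → ℕ, (∀ v ∈ H.verts, part v ∈ P.idx) ∧
    ∀ e : Finset ℕ, e ∈ H.edges ↔ (e ⊆ H.verts ∧ e.card = r ∧ Multiset.map part e.val ∈ P.mE)

/-- `H` is a `P`-subconstruction: a subgraph of a `P`-construction. -/
def IsSubconstruction (P : Pattern r) (H : HGraph r) : Prop :=
  ∃ G : HGraph r, P.IsConstruction G ∧ H.verts ⊆ G.verts ∧ H.edges ⊆ G.edges

end Pattern

/-- `Λ(P,n)`: the maximum number of edges of an `n`-vertex `P`-construction. -/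
noncomputable def patEx (r : ℕ) (P : Pattern r) (n : ℕ) : ℕ :=
  sSup {m | ∃ H : HGraph r, P.IsConstruction H ∧ H.verts.card = n ∧ H.edges.card = m}

/-- The Lagrangian `λ(P) = lim Λ(P,n)/C(n,r)`. -/
noncomputable def patLagrangian (r : ℕ) (P : Pattern r) : ℝ :=
  limUnder atTop fun n : ℕ => (patEx r P n : ℝ) / (n.choose r : ℝ)

/-- The pattern `P` is minimal: `λ(P−i) < λ(P)` for all `i`. -/
def Pattern.Minimal {r : ℕ} (P : Pattern r) : Prop :=
  ∀ i ∈ P.idx, patLagrangian r (P.erase i) < patLagrangian r P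

/-- `(F,P)` is a Turán pair. -/
def IsTuranPair (r : ℕ) (F : HGraph r) (P : Pattern r) : Prop :=
  (∀ H : HGraph r, P.IsConstruction H → ¬ F.IsCopyIn H) ∧
  (∀ H : HGraph r, ¬ F.IsCopyIn H → H.edges.card = exN r H.verts.card F →
    P.IsConstruction H)

/-- `F` is edge-stable with respect to `P` (with Turán density `π`). -/
def EdgeStable (r : ℕ) (F : HGraph r) (P : Pattern r) (π : ℝ) : Prop :=
  ∀ δ : ℝ, 0 < δ → ∃ N₀ : ℕ, ∃ ζ : ℝ, 0 < ζ ∧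
    ∀ H : HGraph r, N₀ ≤ H.verts.card → ¬ F.IsCopyIn H →
      (π - ζ) * (H.verts.card.choose r : ℝ) ≤ (H.edges.card : ℝ) →
      ∃ H' : HGraph r, H'.verts ⊆ H.verts ∧ H'.edges ⊆ H.edges ∧
        (π - δ) * (H.verts.card.choose r : ℝ) ≤ (H'.edges.card : ℝ) ∧
        P.IsSubconstruction H'

/-- `F` is weakly vertex-extendable with respect to `P` (with Turán density `π`). -/
def WeaklyVertexExtendable (r : ℕ) (F : HGraph r) (P : Pattern r) (π : ℝ) : Prop :=
  ∀ δ : ℝ, 0 < δ → ∃ N₀ : ℕ, ∃ ζ : ℝ, 0 < ζ ∧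
    ∀ H : HGraph r, N₀ ≤ H.verts.card → ¬ F.IsCopyIn H →
      (π - ζ) * (((H.verts.card - 1).choose (r-1) : ℕ) : ℝ) ≤ (H.minDeg : ℝ) →
      ∀ v ∈ H.verts, P.IsSubconstruction (H.deleteVert v) →
        (H.deg v : ℝ) ≤ (π + δ) * (((H.verts.card - 1).choose (r-1) : ℕ) : ℝ)

/-- `F` is degree-stable with respect to `P` (with Turán density `π`). -/
def DegreeStable (r : ℕ) (F : HGraph r) (P : Pattern r) (π : ℝ) : Prop :=
  ∃ ζ : ℝ, 0 < ζ ∧ ∃ N₀ : ℕ,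
    ∀ H : HGraph r, N₀ ≤ H.verts.card → ¬ F.IsCopyIn H →
      (π - ζ) * (((H.verts.card - 1).choose (r-1) : ℕ) : ℝ) ≤ (H.minDeg : ℝ) →
      P.IsSubconstruction H

/-!  Concrete constructions -/

/-- The generalized Turán graph `T_r(·,ℓ)` on vertex set `V` (parts are residue
classes mod `ℓ`; on an interval these are balanced). -/
def turanOn (r ℓ : ℕ) (V : Finset ℕ) : HGraph r :=
  HGraph.ofEdges r V ((Finset.powersetCard r V).filter
    fun e => ∀ u ∈ e, ∀ v ∈ e, u % ℓ = v % ℓ → u = v)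

/-- The `r`-graph on `V₁ ∪ V₂` whose edges are all `r`-sets meeting both parts. -/
def crossOn (r : ℕ) (V₁ V₂ : Finset ℕ) : HGraph r :=
  HGraph.ofEdges r (V₁ ∪ V₂) ((Finset.powersetCard r (V₁ ∪ V₂)).filter
    fun e => (e ∩ V₁).Nonempty ∧ (e ∩ V₂).Nonempty)

/-- The `r`-graph on `V₁ ∪ V₂` whose edges are all `r`-sets meeting `V₁` in an odd
number of vertices. -/
def oddCross (r : ℕ) (V₁ V₂ : Finset ℕ) : HGraph r :=
  HGraph.ofEdges r (V₁ ∪ V₂) ((Finset.powersetCard r (V₁ ∪ V₂)).filter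
    fun e => Odd (e ∩ V₁).card)

/-- The Fano plane. -/
def fano : HGraph 3 :=
  HGraph.ofEdges 3 (Finset.Icc 1 7)
    {({1,2,3} : Finset ℕ), {3,4,5}, {5,6,1}, {1,7,4}, {2,7,5}, {3,7,6}, {2,4,6}}

/-- The generalized triangle `𝕋_r`, with edges `{1,…,r}`, `{1,…,r−1,r+1}` and
`{r,…,2r−1}`. -/
def genTri (r : ℕ) : HGraph r :=
  HGraph.ofEdges r (Finset.Icc 1 (2*r - 1))
    {Finset.Icc 1 r, Finset.Icc 1 (r-1) ∪ {r+1}, Finset.Icc r (2*r - 1)}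

/-- `G` is a blowup of the `r`-graph `W` (viewing `W` as a pattern). -/
def IsBlowupOf {r : ℕ} (W G : HGraph r) : Prop :=
  ∃ part : ℕ → ℕ, (∀ v ∈ G.verts, part v ∈ W.verts) ∧
    ∀ e : Finset ℕ, e ∈ G.edges ↔
      (e ⊆ G.verts ∧ e.card = r ∧ ∃ f ∈ W.edges, Multiset.map part e.val = f.val)

/-- The expansion `H^F` of an `r`-graph `F`: for every pair of vertices not covered
by an edge of `F`, add an edge consisting of this pair plus `r−2` new vertices,
these sets of new vertices being pairwise disjoint. -/
def HGraph.expansion {r : ℕ} (F : HGraph r) : HGraph r :=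
  HGraph.ofEdges r
    (F.verts ∪ (((F.verts ×ˢ F.verts).filter fun p =>
        p.1 < p.2 ∧ ∀ e ∈ F.edges, ¬ (p.1 ∈ e ∧ p.2 ∈ e)).biUnion fun p =>
      (Finset.range (r-2)).image fun s =>
        (F.verts.sup id + 1) + (p.1 * (F.verts.sup id + 1) + p.2) * r + s))
    (F.edges ∪ (((F.verts ×ˢ F.verts).filter fun p =>
        p.1 < p.2 ∧ ∀ e ∈ F.edges, ¬ (p.1 ∈ e ∧ p.2 ∈ e)).image fun p =>
      insert p.1 (insert p.2 ((Finset.range (r-2)).image fun s =>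
        (F.verts.sup id + 1) + (p.1 * (F.verts.sup id + 1) + p.2) * r + s))))

/-- A `2`-graph is a tree on `k` vertices: `k` vertices, `k−1` edges, connected. -/
def IsTreeGraph (k : ℕ) (T : HGraph 2) : Prop :=
  T.verts.card = k ∧ T.edges.card = k - 1 ∧
  ∀ S : Finset ℕ, S ⊆ T.verts → S.Nonempty → S ≠ T.verts →
    ∃ e ∈ T.edges, (e ∩ S).Nonempty ∧ (e \ S).Nonempty

/-- `T` satisfies the Erdős–Sós property for `k`: every graph with average degree
greater than `k−2` contains `T`. -/
def ErdosSos (k : ℕ) (T : HGraph 2) : Prop :=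
  ∀ G : HGraph 2, ((k : ℝ) - 2) * (G.verts.card : ℝ) < 2 * (G.edges.card : ℝ) →
    T.IsCopyIn G

/-- The `(r−2)`-expansion `Exp(T)` of a `2`-graph `T`: enlarge every edge by one
common fixed set of `r−2` new vertices. -/
def expTree (r : ℕ) (T : HGraph 2) : HGraph r :=
  HGraph.ofEdges r
    (T.verts ∪ ((Finset.range (r-2)).image fun s => T.verts.sup id + 1 + s))
    (T.edges.image fun e =>
      e ∪ ((Finset.range (r-2)).image fun s => T.verts.sup id + 1 + s))

/-- The chromatic number of a `2`-graph. -/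
noncomputable def chrom (F : HGraph 2) : ℕ :=
  sInf {k | ∃ c : ℕ → ℕ, (∀ v ∈ F.verts, c v < k) ∧
    ∀ e ∈ F.edges, ∀ u ∈ e, ∀ v ∈ e, u ≠ v → c u ≠ c v}

/-- A graph is edge-critical if deleting some edge lowers its chromatic number. -/
def EdgeCritical (F : HGraph 2) : Prop :=
  ∃ e ∈ F.edges, chrom (HGraph.ofEdges 2 F.verts (F.edges.erase e)) < chrom F

/-- `H` is semibipartite: the vertex set splits into `V₁ ∪ V₂` so that every edge
has exactly one vertex in `V₁`. -/
def Semibipartite (r : ℕ) (H : HGraph r) : Prop :=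
  ∃ V₁ ⊆ H.verts, ∀ e ∈ H.edges, (e ∩ V₁).card = 1

/-- `H` is a `K_ℓ^r`-subconstruction, i.e. an `ℓ`-partite `r`-graph. -/
def IsKlSub (r ℓ : ℕ) (H : HGraph r) : Prop :=
  ∃ f : ℕ → ℕ, (∀ v ∈ H.verts, f v < ℓ) ∧
    ∀ e ∈ H.edges, ∀ u ∈ e, ∀ v ∈ e, f u = f v → u = v

/-- The Lagrangian `λ(W)` of an `r`-graph `W`, viewing `W` as a pattern. -/
noncomputable def hgLagrangian (r : ℕ) (W : HGraph r) : ℝ :=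
  limUnder atTop fun n : ℕ =>
    ((sSup {m | ∃ G : HGraph r, IsBlowupOf W G ∧ G.verts.card = n ∧ G.edges.card = m} : ℕ) : ℝ)
      / (n.choose r : ℝ)

/-- The `r`-graph `B(r,ℓ+1)`. -/
def BGraph (r ℓ : ℕ) : HGraph r :=
  HGraph.ofEdges r (Finset.Icc 1 (ℓ+1))
    (insert (Finset.Icc 1 r)
      ((Finset.powersetCard r (Finset.Icc 2 (ℓ+1))).filter
        fun e => (e ∩ Finset.Icc 2 r).card ≤ 1))

/-- The `r`-uniform matching of size two, `M_2^r`. -/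
def matching2 (r : ℕ) : HGraph r :=
  HGraph.ofEdges r (Finset.Icc 1 (2*r)) {Finset.Icc 1 r, Finset.Icc (r+1) (2*r)}

/-- The expanded triangle `𝓒_3^{2r}`. -/
def expandedTriangle (r : ℕ) : HGraph (2*r) :=
  HGraph.ofEdges (2*r) (Finset.Icc 1 (3*r))
    {Finset.Icc 1 (2*r), Finset.Icc (r+1) (3*r), Finset.Icc 1 r ∪ Finset.Icc (2*r+1) (3*r)}

/-- The `4`-graph `𝔽_{4,3}`. -/
def F43 : HGraph 4 :=
  HGraph.ofEdges 4 (Finset.Icc 1 7)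
    {({1,2,3,4} : Finset ℕ), {1,2,3,5}, {1,2,3,6}, {1,2,3,7}, {4,5,6,7}}

/-- The `3`-graph `𝔽_{3,2}`. -/
def F32 : HGraph 3 :=
  HGraph.ofEdges 3 (Finset.Icc 1 5)
    {({1,2,3} : Finset ℕ), {1,2,4}, {1,2,5}, {3,4,5}}

/-- `H` contains pairwise vertex-disjoint copies of `F i`, `ts i` many of each. -/
def HasMixedMatching (r k : ℕ) (F : Fin k → HGraph r) (ts : Fin k → ℕ)
    (H : HGraph r) : Prop :=
  ∃ S : (i : Fin k) → Fin (ts i) → Finset ℕ,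
    (∀ i j, S i j ⊆ H.verts ∧ (S i j).card = (F i).verts.card) ∧
    (∀ p q : Σ i : Fin k, Fin (ts i), p ≠ q → Disjoint (S p.1 p.2) (S q.1 q.2)) ∧
    ∀ i j, (F i).IsCopyIn (H.induce (S i j))

/-- `ex(n, ⊔ᵢ tᵢ Fᵢ)`. -/
noncomputable def exMixedN (r k : ℕ) (F : Fin k → HGraph r) (ts : Fin k → ℕ)
    (n : ℕ) : ℕ :=
  sSup {m | ∃ H : HGraph r, H.verts.card = n ∧ ¬ HasMixedMatching r k F ts H ∧
    H.edges.card = m}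

/-- `ex(n, {F₁,…,F_k})`. -/
noncomputable def exFamN (r k : ℕ) (F : Fin k → HGraph r) (n : ℕ) : ℕ :=
  sSup {m | ∃ H : HGraph r, H.verts.card = n ∧ (∀ i, ¬ (F i).IsCopyIn H) ∧
    H.edges.card = m}



/-! ## Basic facts -/

lemma mem_induce_edges {r : ℕ} (H : HGraph r) (S : Finset ℕ) (e : Finset ℕ) :
    e ∈ (H.induce S).edges ↔ e ∈ H.edges ∧ e ⊆ S := by
  simp only [HGraph.induce, HGraph.ofEdges, Finset.mem_filter]
  constructor
  · rintro ⟨h, _⟩; exact h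
  · intro h
    exact ⟨h, Finset.subset_inter (H.edges_sub e h.1) h.2, H.edges_card e h.1⟩

lemma induce_verts {r : ℕ} (H : HGraph r) (S : Finset ℕ) :
    (H.induce S).verts = H.verts ∩ S := rfl

lemma copy_extract {r : ℕ} {F H : HGraph r} {W : Finset ℕ} (h : F.IsCopyIn (H.induce W)) :
    ∃ S, S ⊆ H.verts ∧ S ⊆ W ∧ S.card = F.verts.card ∧ F.IsCopyIn (H.induce S) := by
  obtain ⟨f, hinj, hv, he⟩ := h
  have hv' : ∀ v ∈ F.verts, f v ∈ H.verts ∧ f v ∈ W := fun v hvF => by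
    have := hv v hvF
    rwa [induce_verts, Finset.mem_inter] at this
  refine ⟨F.verts.image f, ?_, ?_, Finset.card_image_of_injOn hinj, f, hinj, ?_, ?_⟩
  · exact Finset.image_subset_iff.mpr fun v hvF => (hv' v hvF).1
  · exact Finset.image_subset_iff.mpr fun v hvF => (hv' v hvF).2
  · intro v hvF
    rw [induce_verts, Finset.mem_inter]
    exact ⟨(hv' v hvF).1, Finset.mem_image_of_mem f hvF⟩
  · intro e heF
    rw [mem_induce_edges]
    exact ⟨((mem_induce_edges _ _ _).1 (he e heF)).1,
      Finset.image_subset_image (F.edges_sub e heF)⟩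

lemma edges_le_choose {r : ℕ} (H : HGraph r) : H.edges.card ≤ H.verts.card.choose r := by
  rw [← Finset.card_powersetCard]
  apply Finset.card_le_card
  intro e he
  rw [Finset.mem_powersetCard]
  exact ⟨H.edges_sub e he, H.edges_card e he⟩

lemma le_exN {r : ℕ} (F H : HGraph r) (h : ¬ F.IsCopyIn H) :
    H.edges.card ≤ exN r H.verts.card F := by
  apply le_csSup
  · refine ⟨H.verts.card.choose r, ?_⟩
    rintro x ⟨G, hG, _, rfl⟩
    rw [← hG]; exact edges_le_choose G
  · exact ⟨H, rfl, h, rfl⟩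

/-- sets of edges containing a given set -/
lemma card_edges_containing {r : ℕ} (H : HGraph r) (X : Finset ℕ) (j : ℕ) (hj : X.card + j = r) :
    (H.edges.filter fun e => X ⊆ e).card ≤ H.verts.card.choose j := by
  rw [← Finset.card_powersetCard]
  apply Finset.card_le_card_of_injOn (fun e => e \ X)
  · intro e he
    rw [Finset.mem_coe, Finset.mem_filter] at he
    rw [Finset.mem_coe, Finset.mem_powersetCard]
    refine ⟨Finset.sdiff_subset.trans (H.edges_sub e he.1), ?_⟩
    have h1 := Finset.card_sdiff_add_card_eq_card he.2
    have h2 := H.edges_card e he.1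
    change (e \ X).card = j
    omega
  · intro e he e' he' hee
    rw [Finset.mem_coe, Finset.mem_filter] at he he'
    have h1 := Finset.sdiff_union_of_subset he.2
    have h2 := Finset.sdiff_union_of_subset he'.2
    rw [← h1, ← h2]
    simp only at hee
    rw [hee]

lemma deg_le_choose {r : ℕ} (H : HGraph r) (v : ℕ) (hr : 1 ≤ r) :
    H.deg v ≤ H.verts.card.choose (r-1) := by
  have := card_edges_containing H {v} (r-1) (by simp; omega)
  simpa [HGraph.deg] using this

/-- deletion of `U` loses at most the degrees of `U`. -/
lemma edges_delete {r : ℕ} (H : HGraph r) (U : Finset ℕ) (hr : 1 ≤ r) :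
    H.edges.card ≤ (H.induce (H.verts \ U)).edges.card + U.card * H.verts.card.choose (r-1) := by
  have h1 : H.edges ⊆ (H.induce (H.verts \ U)).edges ∪
      U.biUnion (fun w => H.edges.filter fun e => w ∈ e) := by
    intro e he
    rw [Finset.mem_union, mem_induce_edges]
    by_cases h : e ⊆ H.verts \ U
    · exact Or.inl ⟨he, h⟩
    · right
      rw [Finset.not_subset] at h
      obtain ⟨w, hw, hw'⟩ := h
      have : w ∈ H.verts := H.edges_sub e he hw
      simp only [Finset.mem_sdiff, not_and, not_not] at hw'
      simp only [Finset.mem_biUnion, Finset.mem_filter]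
      exact ⟨w, hw' this, he, hw⟩
  refine (Finset.card_le_card h1).trans ((Finset.card_union_le _ _).trans ?_)
  gcongr
  exact Finset.card_biUnion_le_card_mul _ _ _ (fun w _ => deg_le_choose H w hr)

lemma deg_delete {r : ℕ} (H : HGraph r) (U : Finset ℕ) (v : ℕ) (hv : v ∉ U) (hr : 2 ≤ r) :
    H.deg v ≤ (H.induce (H.verts \ U)).deg v + U.card * H.verts.card.choose (r-2) := by
  have h1 : (H.edges.filter fun e => v ∈ e) ⊆
      ((H.induce (H.verts \ U)).edges.filter fun e => v ∈ e) ∪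
      U.biUnion (fun w => H.edges.filter fun e => {v, w} ⊆ e) := by
    intro e he
    rw [Finset.mem_filter] at he
    obtain ⟨he, hve⟩ := he
    rw [Finset.mem_union, Finset.mem_filter, mem_induce_edges]
    by_cases h : e ⊆ H.verts \ U
    · exact Or.inl ⟨⟨he, h⟩, hve⟩
    · right
      rw [Finset.not_subset] at h
      obtain ⟨w, hw, hw'⟩ := h
      have : w ∈ H.verts := H.edges_sub e he hw
      simp only [Finset.mem_sdiff, not_and, not_not] at hw'
      simp only [Finset.mem_biUnion, Finset.mem_filter]
      refine ⟨w, hw' this, he, ?_⟩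
      intro x hx
      simp only [Finset.mem_insert, Finset.mem_singleton] at hx
      rcases hx with rfl | rfl <;> assumption
  unfold HGraph.deg
  refine (Finset.card_le_card h1).trans ((Finset.card_union_le _ _).trans ?_)
  gcongr
  refine Finset.card_biUnion_le_card_mul _ _ _ (fun w hw => ?_)
  apply card_edges_containing
  rw [Finset.card_pair]
  · omega
  · rintro rfl; exact hv hw

/-- Partial matching with prescribed types. -/
def PM {r k : ℕ} (F : Fin k → HGraph r) (τ : ℕ → Fin k) (H : HGraph r) (a : ℕ)
    (S : ℕ → Finset ℕ) : Prop :=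
  (∀ p < a, S p ⊆ H.verts ∧ (S p).card = (F (τ p)).verts.card ∧
    (F (τ p)).IsCopyIn (H.induce (S p))) ∧
  ∀ p < a, ∀ q < a, p ≠ q → Disjoint (S p) (S q)

lemma PM.extend {r k : ℕ} {F : Fin k → HGraph r} {τ : ℕ → Fin k} {H : HGraph r} {a : ℕ}
    {S : ℕ → Finset ℕ} (h : PM F τ H a S) {X : Finset ℕ} (hXv : X ⊆ H.verts)
    (hXc : X.card = (F (τ a)).verts.card) (hX : (F (τ a)).IsCopyIn (H.induce X))
    (hd : ∀ p < a, Disjoint (S p) X) : PM F τ H (a+1) (Function.update S a X) := by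
  constructor
  · intro p hp
    by_cases hpa : p = a
    · subst hpa; simp [hXv, hXc, hX]
    · rw [Function.update_of_ne hpa]
      exact h.1 p (by omega)
  · intro p hp q hq hpq
    by_cases hpa : p = a
    · subst hpa
      rw [Function.update_self, Function.update_of_ne (Ne.symm hpq)]
      exact (hd q (by omega)).symm
    · rw [Function.update_of_ne hpa]
      by_cases hqa : q = a
      · subst hqa
        rw [Function.update_self]
        exact hd p (by omega)
      · rw [Function.update_of_ne hqa]
        exact h.2 p (by omega) q (by omega) hpq

lemma PM.card_le {r k : ℕ} {F : Fin k → HGraph r} {τ : ℕ → Fin k} {H : HGraph r} {a m : ℕ}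
    {S : ℕ → Finset ℕ} (h : PM F τ H a S) (hm : ∀ i, (F i).verts.card ≤ m) :
    ((Finset.range a).biUnion S).card ≤ m * a := by
  have := Finset.card_biUnion_le_card_mul (Finset.range a) S m (fun p hp => by
    rw [(h.1 p (Finset.mem_range.1 hp)).2.1]; exact hm _)
  simpa [mul_comm] using this

lemma greedy {r k m t : ℕ} {F : Fin k → HGraph r} (hm : ∀ i, (F i).verts.card ≤ m)
    {τ : ℕ → Fin k} {H : HGraph r} {T : ℝ}
    (hg : ∀ U ⊆ H.verts, U.card ≤ (m+1)*t → ∀ v ∈ H.verts, v ∉ U → T ≤ H.deg v →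
      ∀ i, (F i).IsCopyIn (H.induce (H.verts \ U))) :
    ∀ d a : ℕ, ∀ L : Finset ℕ, ∀ S, a + d = t + 1 → PM F τ H a S → L ⊆ H.verts →
      (∀ v ∈ L, T ≤ H.deg v) → L.card = d → (∀ p < a, Disjoint (S p) L) →
      ∃ S, PM F τ H (t+1) S := by
  intro d
  induction d with
  | zero =>
    intro a L S had hS _ _ _ _
    have : a = t + 1 := by omega
    subst this
    exact ⟨S, hS⟩
  | succ d ih =>
    intro a L S had hS hLv hLT hLc hdis
    obtain ⟨v, hv⟩ : L.Nonempty := by rw [← Finset.card_pos]; omega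
    have hec : (L.erase v).card = d := by rw [Finset.card_erase_of_mem hv]; omega
    have hB := hS.card_le hm
    obtain ⟨X, hXv, hXW, hXc, hX⟩ := copy_extract
      (hg (L.erase v ∪ (Finset.range a).biUnion S) (by
        apply Finset.union_subset ((Finset.erase_subset _ _).trans hLv)
        exact Finset.biUnion_subset.2 fun p hp => (hS.1 p (Finset.mem_range.1 hp)).1)
      (by
        refine (Finset.card_union_le _ _).trans ?_
        have : m * a ≤ m * t := Nat.mul_le_mul_left _ (by omega)
        have : (m+1)*t = m*t + t := by ring
        omega) v (hLv hv) (by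
          simp only [Finset.mem_union, Finset.mem_erase, Finset.mem_biUnion, Finset.mem_range,
            not_or, not_exists, not_and]
          refine ⟨fun h => (h rfl).elim, fun p hp h => ?_⟩
          exact Finset.disjoint_left.1 (hdis p hp) h hv) (hLT v hv) (τ a))
    rw [Finset.subset_sdiff, Finset.disjoint_union_right, Finset.disjoint_biUnion_right] at hXW
    refine ih (a+1) (L.erase v) _ (by omega) (hS.extend hXv hXc hX
      (fun p hp => (hXW.2.2 p (Finset.mem_range.2 hp)).symm))
      ((Finset.erase_subset _ _).trans hLv) (fun w hw => hLT w (Finset.mem_of_mem_erase hw)) hec ?_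
    intro p hp
    by_cases hpa : p = a
    · subst hpa; rw [Function.update_self]; exact hXW.2.1
    · rw [Function.update_of_ne hpa]
      exact (hdis p (by omega)).mono_right (Finset.erase_subset _ _)

lemma edges_meeting {r : ℕ} (H : HGraph r) (L : Finset ℕ) (hL : L ⊆ H.verts) :
    (H.edges.filter fun e => ¬ Disjoint e L).card ≤
      H.verts.card.choose r - (H.verts.card - L.card).choose r := by
  have h1 : (H.edges.filter fun e => ¬ Disjoint e L) ⊆
      Finset.powersetCard r H.verts \ Finset.powersetCard r (H.verts \ L) := by
    intro e he
    rw [Finset.mem_filter] at he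
    rw [Finset.mem_sdiff, Finset.mem_powersetCard, Finset.mem_powersetCard]
    refine ⟨⟨H.edges_sub e he.1, H.edges_card e he.1⟩, fun h => he.2 ?_⟩
    exact (Finset.subset_sdiff.1 h.1).2
  refine (Finset.card_le_card h1).trans ?_
  rw [Finset.card_sdiff_of_subset (Finset.powersetCard_mono Finset.sdiff_subset),
    Finset.card_powersetCard, Finset.card_powersetCard, Finset.card_sdiff_of_subset hL]

lemma core {r k m t : ℕ} {F : Fin k → HGraph r} (hm : ∀ i, (F i).verts.card ≤ m)
    {τ : ℕ → Fin k} {H : HGraph r} {T : ℝ}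
    (hg : ∀ U ⊆ H.verts, U.card ≤ (m+1)*t → ∀ v ∈ H.verts, v ∉ U → T ≤ H.deg v →
      ∀ i, (F i).IsCopyIn (H.induce (H.verts \ U))) :
    (∃ S, PM F τ H (t+1) S) ∨
    ∃ l b : ℕ, ∃ i, l ≤ t ∧ b ≤ m * (t - l) ∧
      (H.edges.card : ℝ) ≤ ((H.verts.card.choose r - (H.verts.card - l).choose r : ℕ) : ℝ)
        + b * T + exN r (H.verts.card - l - b) (F i) := by
  classical
  obtain ⟨L, hLv, hLT, hLt, hLmax⟩ : ∃ L : Finset ℕ, L ⊆ H.verts ∧ (∀ v ∈ L, T ≤ H.deg v) ∧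
      L.card ≤ t ∧ (L.card < t → ∀ v ∈ H.verts, v ∉ L → (H.deg v : ℝ) ≤ T) := by
    set A := H.verts.filter (fun v => T ≤ (H.deg v : ℝ)) with hA
    by_cases h : t ≤ A.card
    · obtain ⟨L, hL, hLc⟩ := Finset.exists_subset_card_eq h
      refine ⟨L, hL.trans (Finset.filter_subset _ _), fun v hv => (Finset.mem_filter.1 (hL hv)).2,
        hLc.le, fun h => by omega⟩
    · refine ⟨A, Finset.filter_subset _ _, fun v hv => (Finset.mem_filter.1 hv).2, by omega, ?_⟩
      intro _ v hv hvA
      by_contra hcon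
      exact hvA (Finset.mem_filter.2 ⟨hv, by linarith⟩)
  set P : ℕ → Prop := fun a => ∃ S, PM F τ H a S ∧ ∀ p < a, Disjoint (S p) L with hP
  by_cases hfull : P (t + 1 - L.card)
  · left
    obtain ⟨S, hS, hSL⟩ := hfull
    exact greedy hm hg L.card (t+1-L.card) L S (by omega) hS hLv hLT rfl hSL
  right
  have hP0 : P 0 := ⟨fun _ => ∅, ⟨fun p hp => by omega, fun p hp => by omega⟩,
    fun p hp => by omega⟩
  obtain ⟨a, ha, hPa, hPa'⟩ : ∃ a, a < t + 1 - L.card ∧ P a ∧ ¬ P (a+1) := by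
    by_contra hcon
    push Not at hcon
    have : ∀ a, a ≤ t + 1 - L.card → P a := by
      intro a
      induction a with
      | zero => intro _; exact hP0
      | succ a ih => intro h; exact hcon a (by omega) (ih (by omega))
    exact hfull (this _ le_rfl)
  obtain ⟨S, hS, hSL⟩ := hPa
  set B := (Finset.range a).biUnion S with hBdef
  have hBc : B.card ≤ m * a := hS.card_le hm
  have hBv : B ⊆ H.verts :=
    Finset.biUnion_subset.2 fun p hp => (hS.1 p (Finset.mem_range.1 hp)).1
  have hBL : Disjoint B L := by
    rw [hBdef, Finset.disjoint_biUnion_left]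
    exact fun p hp => hSL p (Finset.mem_range.1 hp)
  refine ⟨L.card, B.card, τ a, hLt, hBc.trans (Nat.mul_le_mul_left _ (by omega)), ?_⟩
  have hfree : ¬ (F (τ a)).IsCopyIn (H.induce ((H.verts \ L) \ B)) := by
    intro hcopy
    obtain ⟨X, hXv, hXW, hXc, hX⟩ := copy_extract hcopy
    rw [Finset.subset_sdiff, Finset.subset_sdiff, Finset.disjoint_biUnion_right] at hXW
    refine hPa' ⟨_, hS.extend hXv hXc hX
      (fun p hp => (hXW.2 p (Finset.mem_range.2 hp)).symm), ?_⟩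
    intro p hp
    by_cases hpa : p = a
    · subst hpa; rw [Function.update_self]; exact hXW.1.2
    · rw [Function.update_of_ne hpa]
      exact hSL p (by omega)
  have hex := le_exN _ _ hfree
  have hvc : (H.induce ((H.verts \ L) \ B)).verts.card = H.verts.card - L.card - B.card := by
    rw [induce_verts, Finset.inter_eq_right.2 (Finset.sdiff_subset.trans Finset.sdiff_subset),
      Finset.card_sdiff_of_subset (Finset.subset_sdiff.2 ⟨hBv, hBL⟩),
      Finset.card_sdiff_of_subset hLv]
  rw [hvc] at hex
  have hsplit : H.edges ⊆ (H.edges.filter fun e => ¬ Disjoint e L) ∪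
      (B.biUnion (fun w => H.edges.filter fun e => w ∈ e)) ∪
      (H.induce ((H.verts \ L) \ B)).edges := by
    intro e he
    by_cases h1 : Disjoint e L
    · by_cases h2 : Disjoint e B
      · apply Finset.mem_union_right
        rw [mem_induce_edges]
        exact ⟨he, Finset.subset_sdiff.2 ⟨Finset.subset_sdiff.2 ⟨H.edges_sub e he, h1⟩, h2⟩⟩
      · apply Finset.mem_union_left
        apply Finset.mem_union_right
        rw [Finset.not_disjoint_iff] at h2
        obtain ⟨w, hw, hwB⟩ := h2
        exact Finset.mem_biUnion.2 ⟨w, hwB, Finset.mem_filter.2 ⟨he, hw⟩⟩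
    · apply Finset.mem_union_left
      apply Finset.mem_union_left
      exact Finset.mem_filter.2 ⟨he, h1⟩
  have hB2 : ((B.biUnion (fun w => H.edges.filter fun e => w ∈ e)).card : ℝ) ≤ B.card * T := by
    have h1 : ((B.biUnion (fun w => H.edges.filter fun e => w ∈ e)).card : ℝ) ≤
        ∑ w ∈ B, (H.deg w : ℝ) := by
      have := Finset.card_biUnion_le (s := B) (t := fun w => H.edges.filter fun e => w ∈ e)
      exact_mod_cast this
    refine h1.trans ?_
    have h2 : ∀ w ∈ B, (H.deg w : ℝ) ≤ T := by
      intro w hw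
      have ha0 : a ≠ 0 := by
        rintro rfl
        simp [hBdef] at hw
      exact hLmax (by omega) w (hBv hw) (Finset.disjoint_left.1 hBL hw)
    calc _ ≤ ∑ w ∈ B, T := Finset.sum_le_sum h2
      _ = _ := by simp
  have hc := (Finset.card_le_card hsplit).trans ((Finset.card_union_le _ _).trans
    (Nat.add_le_add_right (Finset.card_union_le _ _) _))
  have hc' : (H.edges.card : ℝ) ≤ ((H.edges.filter fun e => ¬ Disjoint e L).card : ℝ) +
      ((B.biUnion (fun w => H.edges.filter fun e => w ∈ e)).card : ℝ) +
      ((H.induce ((H.verts \ L) \ B)).edges.card : ℝ) := by exact_mod_cast hc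
  have h3 : ((H.edges.filter fun e => ¬ Disjoint e L).card : ℝ) ≤
    ((H.verts.card.choose r - (H.verts.card - L.card).choose r : ℕ) : ℝ) := by
    exact_mod_cast edges_meeting H L hLv
  have h4 : ((H.induce ((H.verts \ L) \ B)).edges.card : ℝ) ≤
      (exN r (H.verts.card - L.card - B.card) (F (τ a)) : ℝ) := by exact_mod_cast hex
  linarith

/-- From a typed list of disjoint copies to a mixed matching. -/
lemma mixed_of_PM {r k t : ℕ} {F : Fin k → HGraph r} {ts : Fin k → ℕ}
    (e : (Σ i : Fin k, Fin (ts i)) ≃ Fin (t+1)) {τ : ℕ → Fin k}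
    (hτ : ∀ x, τ (e x : ℕ) = x.1)
    {H : HGraph r} {S : ℕ → Finset ℕ} (h : PM F τ H (t+1) S) : HasMixedMatching r k F ts H := by
  refine ⟨fun i j => S (e ⟨i, j⟩), ?_, ?_, ?_⟩
  · intro i j
    have := h.1 _ (e ⟨i, j⟩).2
    rw [hτ] at this
    exact ⟨this.1, this.2.1⟩
  · intro p q hpq
    apply h.2 _ (e p).2 _ (e q).2
    intro hh
    exact hpq (e.injective (Fin.ext hh))
  · intro i j
    have := h.1 _ (e ⟨i, j⟩).2
    rw [hτ] at this
    exact this.2.2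

lemma exists_types {k t : ℕ} {ts : Fin k → ℕ} (hts : ∑ i, ts i = t + 1) :
    ∃ (e : (Σ i : Fin k, Fin (ts i)) ≃ Fin (t+1)) (τ : ℕ → Fin k),
      ∀ x, τ (e x : ℕ) = x.1 := by
  have e : (Σ i : Fin k, Fin (ts i)) ≃ Fin (t+1) := Fintype.equivFinOfCardEq (by simp [hts])
  refine ⟨e, fun p => if h : p < t+1 then (e.symm ⟨p, h⟩).1 else (e.symm 0).1, ?_⟩
  intro x
  simp only [dif_pos (e x).2]
  simp


/-! ## Lower bound construction -/

lemma lower_bound {r k n t : ℕ} {F : Fin k → HGraph r} {ts : Fin k → ℕ}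
    (hts : ∑ i, ts i = t + 1) (htn : t ≤ n) (hFe : ∀ i, (F i).edges.Nonempty) :
    n.choose r - (n - t).choose r + exFamN r k F (n - t) ≤ exMixedN r k F ts n := by
  classical
  obtain ⟨G, hGc, hGfree, hGe⟩ : ∃ H : HGraph r, H.verts.card = n - t ∧
      (∀ i, ¬ (F i).IsCopyIn H) ∧ H.edges.card = exFamN r k F (n-t) := by
    have hne : {x | ∃ H : HGraph r, H.verts.card = n - t ∧ (∀ i, ¬ (F i).IsCopyIn H) ∧
        H.edges.card = x}.Nonempty := by
      refine ⟨_, emptyOn r (Finset.range (n-t)), ?_, ?_, rfl⟩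
      · simp [emptyOn, HGraph.ofEdges]
      · rintro i ⟨f, _, _, he⟩
        obtain ⟨e, hei⟩ := hFe i
        simpa [emptyOn, HGraph.ofEdges] using he e hei
    have hbdd : BddAbove {x | ∃ H : HGraph r, H.verts.card = n - t ∧
        (∀ i, ¬ (F i).IsCopyIn H) ∧ H.edges.card = x} := by
      refine ⟨(n-t).choose r, ?_⟩
      rintro x ⟨G, hG, _, rfl⟩
      rw [← hG]; exact edges_le_choose G
    exact Nat.sSup_mem hne hbdd
  obtain ⟨V, hGV, hVc⟩ := Infinite.exists_superset_card_eq G.verts n (by omega)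
  set K : HGraph r := HGraph.ofEdges r V
    ((Finset.powersetCard r V \ Finset.powersetCard r G.verts) ∪ G.edges) with hK
  have hKe : K.edges = (Finset.powersetCard r V \ Finset.powersetCard r G.verts) ∪ G.edges := by
    rw [hK]
    simp only [HGraph.ofEdges]
    apply Finset.filter_true_of_mem
    intro e he
    rw [Finset.mem_union, Finset.mem_sdiff, Finset.mem_powersetCard] at he
    rcases he with he | he
    · exact he.1
    · exact ⟨(G.edges_sub e he).trans hGV, G.edges_card e he⟩
  have hKv : K.verts = V := rfl
  have hKcard : K.edges.card = n.choose r - (n-t).choose r + exFamN r k F (n-t) := by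
    rw [hKe, Finset.card_union_of_disjoint, Finset.card_sdiff_of_subset
      (Finset.powersetCard_mono hGV), Finset.card_powersetCard, Finset.card_powersetCard,
      hVc, hGc, hGe]
    rw [Finset.disjoint_left]
    intro e he he'
    rw [Finset.mem_sdiff, Finset.mem_powersetCard, Finset.mem_powersetCard] at he
    exact he.2 ⟨G.edges_sub e he', G.edges_card e he'⟩
  rw [← hKcard]
  apply le_csSup
  · refine ⟨n.choose r, ?_⟩
    rintro x ⟨G, hG, _, rfl⟩
    rw [← hG]; exact edges_le_choose G
  refine ⟨K, by rw [hKv, hVc], ?_, rfl⟩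
  rintro ⟨S, hS, hdis, hcopy⟩
  -- some `S i j` avoids `V \ G.verts`
  have hex : ∃ p : Σ i : Fin k, Fin (ts i), S p.1 p.2 ⊆ G.verts := by
    by_contra hcon
    push Not at hcon
    have hpick : ∀ p : Σ i : Fin k, Fin (ts i), ∃ x, x ∈ S p.1 p.2 ∧ x ∈ V \ G.verts := by
      intro p
      obtain ⟨x, hx, hx'⟩ := Finset.not_subset.1 (hcon p)
      exact ⟨x, hx, Finset.mem_sdiff.2 ⟨(hS p.1 p.2).1 hx, hx'⟩⟩
    choose g hg1 hg2 using hpick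
    have hinj : Function.Injective g := by
      intro p q hpq
      by_contra hne
      exact Finset.disjoint_left.1 (hdis p q hne) (hg1 p) (hpq ▸ hg1 q)
    have h1 : Fintype.card (Σ i : Fin k, Fin (ts i)) ≤ (V \ G.verts).card := by
      rw [← Finset.card_univ]
      exact Finset.card_le_card_of_injOn g (fun p _ => hg2 p) (hinj.injOn)
    rw [Finset.card_sdiff_of_subset hGV, hVc, hGc] at h1
    simp [hts] at h1
    omega
  obtain ⟨⟨i, j⟩, hij⟩ := hex
  simp only at hij
  obtain ⟨f, hf, hfv, hfe⟩ := hcopy i j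
  refine hGfree i ⟨f, hf, ?_, ?_⟩
  · intro v hv
    have := hfv v hv
    rw [induce_verts, Finset.mem_inter] at this
    exact hij this.2
  · intro e he
    have := (mem_induce_edges _ _ _).1 (hfe e he)
    rw [hKe, Finset.mem_union, Finset.mem_sdiff, Finset.mem_powersetCard,
      Finset.mem_powersetCard] at this
    rcases this.1 with h | h
    · exact (h.2 ⟨this.2.trans hij, h.1.2⟩).elim
    · exact h

lemma edges_nonempty_of_density {r : ℕ} {F : HGraph r} {x : ℝ} (h : HasTuranDensity r F x)
    (hx : 0 < x) : F.edges.Nonempty := by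
  by_contra hne
  rw [Finset.not_nonempty_iff_eq_empty] at hne
  have hz : ∀ n ≥ F.verts.card, exN r n F = 0 := by
    intro n hn
    have : {m | ∃ H : HGraph r, H.verts.card = n ∧ ¬ F.IsCopyIn H ∧ H.edges.card = m} = ∅ := by
      rw [Set.eq_empty_iff_forall_notMem]
      rintro y ⟨H, hH, hcopy, -⟩
      apply hcopy
      obtain ⟨f, hf, hinj⟩ := Set.Finite.exists_injOn_of_encard_le
        (s := (F.verts : Set ℕ)) (t := (H.verts : Set ℕ)) F.verts.finite_toSet (by
          rw [Set.encard_coe_eq_coe_finsetCard, Set.encard_coe_eq_coe_finsetCard]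
          exact_mod_cast (by omega : F.verts.card ≤ H.verts.card))
      exact ⟨f, hinj, fun v hv => hf hv, by simp [hne]⟩
    simp [exN, this]
  have h0 : Tendsto (fun n : ℕ => (exN r n F : ℝ) / (n.choose r : ℝ)) atTop (nhds 0) := by
    apply tendsto_const_nhds.congr'
    filter_upwards [eventually_ge_atTop F.verts.card] with n hn
    simp [hz n hn]
  have := tendsto_nhds_unique h h0
  linarith


/-! ## Binomial estimates -/

lemma choose_sub_lower (n j u : ℕ) (hu : u ≤ n) :
    n.choose (j+1) ≤ (n-u).choose (j+1) + u * n.choose j := by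
  induction u with
  | zero => simp
  | succ u ih =>
    have h1 := ih (by omega)
    obtain ⟨a, ha⟩ : ∃ a, n - u = a + 1 := ⟨n-u-1, by omega⟩
    have h2 : n - (u+1) = a := by omega
    rw [ha, Nat.choose_succ_succ'] at h1
    rw [h2]
    have h3 : a.choose j ≤ n.choose j := Nat.choose_le_choose j (by omega)
    have : (u+1) * n.choose j = u * n.choose j + n.choose j := by ring
    omega

lemma choose_add_lower (M j s : ℕ) :
    M.choose (j+1) + s * M.choose j ≤ (M+s).choose (j+1) := by
  induction s with
  | zero => simp
  | succ s ih =>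
    rw [← add_assoc, Nat.choose_succ_succ']
    have h3 : M.choose j ≤ (M+s).choose j := Nat.choose_le_choose j (by omega)
    have : (s+1) * M.choose j = s * M.choose j + M.choose j := by ring
    omega

lemma r_choose_le (n r : ℕ) (hr : 1 ≤ r) :
    (r : ℝ) * (n.choose r : ℝ) ≤ n * (n.choose (r-1) : ℝ) := by
  obtain ⟨j, rfl⟩ : ∃ j, r = j + 1 := ⟨r-1, by omega⟩
  have h := Nat.choose_succ_right_eq n j
  have h2 : (j+1) * n.choose (j+1) ≤ n * n.choose j := by
    rw [mul_comm, h, mul_comm]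
    exact Nat.mul_le_mul_right _ (by omega)
  simp only [Nat.add_sub_cancel]
  exact_mod_cast h2

lemma r_choose_eq (n r : ℕ) (hr : 1 ≤ r) (hn : 1 ≤ n) :
    (r : ℝ) * (n.choose r : ℝ) = n * ((n-1).choose (r-1) : ℝ) := by
  obtain ⟨j, rfl⟩ : ∃ j, r = j + 1 := ⟨r-1, by omega⟩
  obtain ⟨a, rfl⟩ : ∃ a, n = a + 1 := ⟨n-1, by omega⟩
  have h := Nat.add_one_mul_choose_eq a j
  simp only [Nat.add_sub_cancel]
  rw [mul_comm]
  exact_mod_cast h.symm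

lemma choose_two_bound (n r : ℕ) (hr : 2 ≤ r) (hn : 2 * r ≤ n) (u x : ℝ) (hx : 0 ≤ x)
    (hu : u ≤ x * n) :
    u * (n.choose (r-2) : ℝ) ≤ 2 * r * x * (n.choose (r-1) : ℝ) := by
  obtain ⟨j, rfl⟩ : ∃ j, r = j + 2 := ⟨r-2, by omega⟩
  have h := Nat.choose_succ_right_eq n j
  have h2 : n.choose j * n ≤ 2 * (j+2) * n.choose (j+1) := by
    have h3 : n.choose j * n ≤ n.choose j * (2 * (n-j)) := Nat.mul_le_mul_left _ (by omega)
    have h4 : n.choose j * (2 * (n-j)) = 2 * (n.choose (j+1) * (j+1)) := by rw [h]; ring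
    rw [h4] at h3
    refine h3.trans ?_
    nlinarith [Nat.zero_le (n.choose (j+1))]
  have h5 : (n.choose j : ℝ) * n ≤ 2 * (j+2) * (n.choose (j+1) : ℝ) := by exact_mod_cast h2
  have e1 : j + 2 - 2 = j := by omega
  have e2 : j + 2 - 1 = j + 1 := by omega
  rw [e1, e2]
  push_cast
  have h6 : (0:ℝ) ≤ n.choose j := by positivity
  nlinarith [mul_le_mul_of_nonneg_right hu h6, mul_le_mul_of_nonneg_left h5 hx]

/-- `C(n-u, r-1)` is nearly `C(n,r-1)`. -/
lemma choose_near (n r u : ℕ) (hr : 2 ≤ r) (hn : 2 * r ≤ n) (hun : u ≤ n) (x : ℝ) (hx : 0 ≤ x)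
    (hu : (u:ℝ) ≤ x * n) :
    (1 - 2 * r * x) * (n.choose (r-1) : ℝ) ≤ ((n-u).choose (r-1) : ℝ) := by
  have h := choose_two_bound n r hr hn u x hx hu
  have h2 := choose_sub_lower n (r-2) u hun
  have e : r - 2 + 1 = r - 1 := by omega
  rw [e] at h2
  have h3 : (n.choose (r-1) : ℝ) ≤ ((n-u).choose (r-1) : ℝ) + u * (n.choose (r-2) : ℝ) := by
    exact_mod_cast h2
  linarith

lemma telescope_aux (f : ℕ → ℝ) (X E : ℝ) (A n : ℕ)
    (h : ∀ z, A < z → z ≤ n → |f z - f (z-1) - X| ≤ E) (y d : ℕ) (hy : A ≤ y) (hd : y + d ≤ n) :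
    |f (y+d) - f y - d * X| ≤ d * E := by
  induction d with
  | zero => simp
  | succ d ih =>
    have h1 := ih (by omega)
    have h2 := h (y+d+1) (by omega) (by omega)
    have e : y + d + 1 - 1 = y + d := by omega
    rw [e] at h2
    rw [abs_le] at *
    rw [← add_assoc]
    push_cast
    constructor <;> linarith

lemma telescope (f : ℕ → ℝ) (X E : ℝ) (A n : ℕ)
    (h : ∀ z, A < z → z ≤ n → |f z - f (z-1) - X| ≤ E) (x y : ℕ) (hx : A ≤ x) (hxn : x ≤ n)
    (hy : A ≤ y) (hyn : y ≤ n) :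
    |f x - f y - ((x:ℝ) - y) * X| ≤ |(x:ℝ) - y| * E := by
  rcases le_total y x with hh | hh
  · obtain ⟨d, rfl⟩ := Nat.exists_eq_add_of_le hh
    have := telescope_aux f X E A n h y d hy hxn
    push_cast
    simpa using this
  · obtain ⟨d, rfl⟩ := Nat.exists_eq_add_of_le hh
    have := telescope_aux f X E A n h x d hx hyn
    push_cast
    have e1 : (x:ℝ) - (x + d) = - d := by ring
    rw [e1, abs_neg, abs_of_nonneg (Nat.cast_nonneg d : (0:ℝ) ≤ d), abs_sub_comm]
    have e2 : -(d:ℝ) * X - (f x - f (x+d)) = f (x+d) - f x - d * X := by ring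
    rw [e2]
    exact this

/-! ## Analytic part -/

/-- Good behaviour of `F` at `n`. -/
structure NiceAt (r m n : ℕ) (F : HGraph r) (π c η : ℝ) : Prop where
  lo : (π - η) * (n.choose r : ℝ) ≤ exN r n F
  hi : (exN r n F : ℝ) ≤ (π + η) * (n.choose r : ℝ)
  bd : BoundedAt r n F (c * (n.choose (r-1) : ℝ)) ((1 - π) / (4 * m) * (n.choose (r-1) : ℝ))
  sm : SmoothAt r n F ((1 - π) / (8 * m) * (n.choose (r-1) : ℝ))

lemma delta_near {r m n z : ℕ} (hr : 2 ≤ r) (hm : 1 ≤ m) {F : HGraph r} {π c η : ℝ}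
    (hπ : π ≤ 1) (hη : 0 < η) (hηπ : η ≤ π) (hηq : η ≤ (1 - π) / (16 * m))
    (h1 : NiceAt r m z F π c η) (h2 : NiceAt r m (z-1) F π c η) (hz2 : 2 ≤ z) (hzn : z ≤ n)
    (hC : (1 - (1-π)/(16*m)) * (n.choose (r-1) : ℝ) ≤ ((z-2).choose (r-1) : ℝ)) :
    |(exN r z F : ℝ) - (exN r (z-1) F : ℝ) - π * (n.choose (r-1) : ℝ)|
      ≤ (1 - π)/(4*m) * (n.choose (r-1) : ℝ) := by
  have hs := h1.sm
  unfold SmoothAt deltaN at hs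
  have hz1 : (0:ℝ) < ((z-1 : ℕ) : ℝ) := by exact_mod_cast (by omega : 0 < z-1)
  have hid := r_choose_eq (z-1) r (by omega) (by omega)
  have e : z - 1 - 1 = z - 2 := by omega
  rw [e] at hid
  have hr0 : (0:ℝ) ≤ r := by positivity
  have dlo : (π - η) * ((z-2).choose (r-1) : ℝ) ≤ dN r (z-1) F := by
    unfold dN
    rw [le_div_iff₀ hz1]
    have := mul_le_mul_of_nonneg_left h2.lo hr0
    calc _ = (π - η) * (((z-1:ℕ):ℝ) * ((z-2).choose (r-1) : ℝ)) := by ring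
      _ = (π - η) * (r * ((z-1).choose r : ℝ)) := by rw [hid]
      _ = r * ((π - η) * ((z-1).choose r : ℝ)) := by ring
      _ ≤ _ := this
  have dhi : dN r (z-1) F ≤ (π + η) * ((z-2).choose (r-1) : ℝ) := by
    unfold dN
    rw [div_le_iff₀ hz1]
    have := mul_le_mul_of_nonneg_left h2.hi hr0
    calc _ ≤ r * ((π + η) * ((z-1).choose r : ℝ)) := this
      _ = (π + η) * (r * ((z-1).choose r : ℝ)) := by ring
      _ = (π + η) * (((z-1:ℕ):ℝ) * ((z-2).choose (r-1) : ℝ)) := by rw [hid]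
      _ = _ := by ring
  have hm0 : (0:ℝ) < m := by exact_mod_cast hm
  set C := (n.choose (r-1) : ℝ) with hCdef
  have hC0 : 0 ≤ C := by positivity
  have hc2 : ((z-2).choose (r-1) : ℝ) ≤ C := by
    rw [hCdef]
    exact_mod_cast Nat.choose_le_choose (r-1) (by omega : z - 2 ≤ n)
  have hcz : (z.choose (r-1) : ℝ) ≤ C := by
    rw [hCdef]
    exact_mod_cast Nat.choose_le_choose (r-1) hzn
  set w := (1-π)/(16*m) with hw
  have hw0 : 0 ≤ w := by apply div_nonneg <;> [linarith; positivity]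
  have e8 : (1-π)/(8*m) = 2 * w := by rw [hw]; field_simp; ring
  have e4 : (1-π)/(4*m) = 4 * w := by rw [hw]; field_simp; ring
  rw [e8] at hs
  rw [e4]
  rw [abs_le] at hs ⊢
  have l1 : π * C - 2 * w * C ≤ dN r (z-1) F := by
    have : (π - η) * ((1 - w) * C) ≤ (π - η) * ((z-2).choose (r-1) : ℝ) :=
      mul_le_mul_of_nonneg_left hC (by linarith)
    have h3 : π * C - 2 * w * C ≤ (π - η) * ((1 - w) * C) := by
      have : 0 ≤ C * ((w - η) + w * (1 - π) + η * w) := by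
        apply mul_nonneg hC0
        have := mul_nonneg hw0 (by linarith : 0 ≤ 1 - π)
        have := mul_nonneg hη.le hw0
        linarith
      nlinarith
    linarith
  have l2 : dN r (z-1) F ≤ π * C + 2 * w * C := by
    have : (π + η) * ((z-2).choose (r-1) : ℝ) ≤ (π + η) * C :=
      mul_le_mul_of_nonneg_left hc2 (by linarith)
    have : η * C ≤ w * C := mul_le_mul_of_nonneg_right hηq hC0
    have := mul_nonneg hw0 hC0
    linarith
  have l3 : 2 * w * (z.choose (r-1) : ℝ) ≤ 2 * w * C :=
    mul_le_mul_of_nonneg_left hcz (by linarith)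
  constructor <;> linarith [hs.1, hs.2]

set_option maxHeartbeats 1000000 in
lemma greedy_cond {r m n t : ℕ} (hr : 2 ≤ r) (hm : 1 ≤ m) {F H : HGraph r} {π p c η : ℝ}
    (hc : 0 < c) (hη : 0 < η) (hηc : η ≤ c / 10) (hηq : η ≤ (1 - p) / (16 * m))
    (hp0 : 0 < p) (hp1 : p < 1) (hπ0 : 0 < π) (hπp : π ≤ p) (hn : 2 * r ≤ n)
    (hHn : H.verts.card = n) (hH : (p - η) * (n.choose r : ℝ) ≤ H.edges.card)
    (ht1 : (t:ℝ) + 1 ≤ c / (4 * Real.exp 1 * r * m) * n)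
    (ht2 : (t:ℝ) + 1 ≤ (1 - p) / (64 * r * m^2) * n)
    (hnice : ∀ n' : ℕ, n ≤ 2 * n' → n' ≤ n → NiceAt r m n' F π c η)
    {U : Finset ℕ} (hU : U ⊆ H.verts) (hUc : U.card ≤ (m+1)*t) {v : ℕ} (hv : v ∈ H.verts)
    (hvU : v ∉ U) (hdeg : (p + (1-p)/(2*m)) * (n.choose (r-1) : ℝ) ≤ H.deg v) :
    F.IsCopyIn (H.induce (H.verts \ U)) := by
  by_contra hfree
  have hm0 : (1:ℝ) ≤ m := by exact_mod_cast hm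
  have hr0 : (2:ℝ) ≤ r := by exact_mod_cast hr
  have hn0 : (0:ℝ) < n := by exact_mod_cast (by omega : 0 < n)
  have hu2 : (U.card : ℝ) ≤ 2 * m * (t + 1) := by
    have : (U.card : ℝ) ≤ (m+1)*t := by exact_mod_cast hUc
    have ht0 : (0:ℝ) ≤ t := by positivity
    nlinarith
  set u : ℝ := (U.card : ℝ) with hu
  set x : ℝ := (1-p)/(32*r*m) with hx
  have hx0 : 0 ≤ x := by apply div_nonneg <;> [linarith; positivity]
  have hx1 : x ≤ 1/64 := by
    rw [hx, div_le_div_iff₀ (by positivity) (by norm_num)]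
    nlinarith
  have hux : u ≤ x * n := by
    have : 2 * m * ((1 - p) / (64 * r * m^2) * n) = x * n := by rw [hx]; field_simp; ring
    rw [← this]
    refine hu2.trans (mul_le_mul_of_nonneg_left ht2 (by positivity))
  have huc : r * u ≤ c/4 * n := by
    have h1 : 2 * m * (c / (4 * Real.exp 1 * r * m) * n) = c / (2 * Real.exp 1) * n / r := by
      field_simp; ring
    have h2 : u ≤ c / (2 * Real.exp 1) * n / r := by
      rw [← h1]
      exact hu2.trans (mul_le_mul_of_nonneg_left ht1 (by positivity))
    have h3 : r * u ≤ c / (2 * Real.exp 1) * n := by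
      rw [le_div_iff₀ (by positivity)] at h2; linarith
    have h4 : c / (2 * Real.exp 1) ≤ c / 4 := by
      apply div_le_div_of_nonneg_left hc.le (by norm_num)
      have := Real.add_one_le_exp (1:ℝ); linarith
    exact h3.trans (mul_le_mul_of_nonneg_right h4 hn0.le)
  have hUn : U.card ≤ n := by rw [← hHn]; exact Finset.card_le_card hU
  set n' := n - U.card with hn'
  have hn'r : (n' : ℝ) = n - u := by rw [hn', Nat.cast_sub hUn]
  have hn'34 : (3/4:ℝ) * n ≤ n' := by rw [hn'r]; nlinarith
  have hnn : n ≤ 2 * n' := by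
    have : (n:ℝ) ≤ 2 * n' := by linarith
    exact_mod_cast this
  have hN := hnice n' hnn (by omega)
  have hvc : (H.induce (H.verts \ U)).verts.card = n' := by
    rw [induce_verts, Finset.inter_eq_right.2 Finset.sdiff_subset,
      Finset.card_sdiff_of_subset hU, hHn]
  have hB := hN.bd _ hvc hfree
  have hed := edges_delete H U (by omega)
  have hdd := deg_delete H U v hvU hr
  rw [hHn] at hed hdd
  set H' := H.induce (H.verts \ U) with hH'
  set C := (n.choose (r-1) : ℝ) with hC
  have hCpos : 0 < C := by
    have : 0 < n.choose (r-1) := Nat.choose_pos (by omega)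
    rw [hC]
    exact_mod_cast this
  have hed' : (H.edges.card : ℝ) ≤ H'.edges.card + u * C := by
    rw [hC, hu]; exact_mod_cast hed
  have hdd' : (H.deg v : ℝ) ≤ H'.deg v + u * (n.choose (r-2) : ℝ) := by
    rw [hu]; exact_mod_cast hdd
  have h2 := choose_two_bound n r hr hn u x hx0 hux
  have hnear := choose_near n r U.card hr hn hUn x hx0 hux
  rw [← hn'] at hnear
  set C' := (n'.choose (r-1) : ℝ) with hC'
  have hC'C : C' ≤ C := by
    rw [hC, hC']; exact_mod_cast Nat.choose_le_choose (r-1) (by omega : n' ≤ n)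
  have hDD : (n'.choose r : ℝ) ≤ (n.choose r : ℝ) := by
    exact_mod_cast Nat.choose_le_choose r (by omega : n' ≤ n)
  set w := (1-p)/(16*m) with hw
  have hw0 : 0 ≤ w := by apply div_nonneg <;> [linarith; positivity]
  have hw1 : w ≤ 1/16 := by
    rw [hw, div_le_div_iff₀ (by positivity) (by norm_num)]
    nlinarith
  have ex : 2 * r * x = w := by rw [hx, hw]; field_simp; ring
  rw [ex] at h2 hnear
  have hrD := r_choose_le n r (by omega)
  have hrD' := r_choose_le n' r (by omega)
  have hn'0 : (0:ℝ) < n' := by linarith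
  have hD0 : (0:ℝ) ≤ (n.choose r : ℝ) := by positivity
  have hD'0 : (0:ℝ) ≤ (n'.choose r : ℝ) := by positivity
  have hC'0 : 0 ≤ C' := by positivity
  -- the average degree condition
  have havg : dN r n' F - c * C' ≤ H'.avgDeg := by
    unfold dN HGraph.avgDeg
    rw [hvc, sub_le_iff_le_add, ← sub_le_iff_le_add', ← sub_div, div_le_iff₀ hn'0]
    have k1 : (exN r n' F : ℝ) ≤ (p + η) * (n.choose r : ℝ) := by
      refine hN.hi.trans ?_
      calc _ ≤ (p + η) * (n'.choose r : ℝ) := mul_le_mul_of_nonneg_right (by linarith) hD'0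
        _ ≤ _ := mul_le_mul_of_nonneg_left hDD (by linarith)
    have k2 : (exN r n' F : ℝ) - H'.edges.card ≤ 2 * η * (n.choose r : ℝ) + u * C := by linarith
    have k3 : r * (exN r n' F : ℝ) - r * H'.edges.card ≤ 2 * η * (n * C) + (r * u) * C := by
      have := mul_le_mul_of_nonneg_left k2 (by linarith : (0:ℝ) ≤ r)
      have := mul_le_mul_of_nonneg_left hrD (by linarith : (0:ℝ) ≤ 2 * η)
      linarith
    have k4 : 2 * η * (n * C) ≤ c/5 * (n*C) :=
      mul_le_mul_of_nonneg_right (by linarith) (by positivity)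
    have k5 : (r * u) * C ≤ c/4 * n * C := mul_le_mul_of_nonneg_right huc hCpos.le
    have k6 : (3/4:ℝ) * C ≤ C' := by nlinarith
    have k7 : (3/4*n) * (3/4*C) ≤ n' * C' := by
      apply mul_le_mul hn'34 k6 (by positivity) hn'0.le
    have k8 : c * ((3/4*n) * (3/4*C)) ≤ c * (n' * C') := mul_le_mul_of_nonneg_left k7 hc.le
    have k9 : 0 ≤ c * (n * C) := by positivity
    linarith
  have hmax := hB havg
  have hvH' : v ∈ H'.verts := by
    rw [hH', induce_verts]
    simp [hv, hvU]
  have hle : (H'.deg v : ℝ) ≤ H'.maxDeg := by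
    exact_mod_cast (Finset.le_sup hvH' : H'.deg v ≤ H'.verts.sup H'.deg)
  have hd : dN r n' F ≤ (π + η) * C' := by
    unfold dN
    rw [div_le_iff₀ hn'0]
    have q1 := mul_le_mul_of_nonneg_left hN.hi (by linarith : (0:ℝ) ≤ r)
    have q2 := mul_le_mul_of_nonneg_left hrD' (by linarith : 0 ≤ π + η)
    linarith
  have e2 : (1-p)/(2*m) = 8 * w := by rw [hw]; field_simp; ring
  rw [e2] at hdeg
  have ewp : (1-π)/(4*m) = 4 * w + (p - π)/(4*m) := by rw [hw]; field_simp; ring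
  have hpm : (p - π)/(4*m) ≤ p - π := div_le_self (by linarith) (by linarith)
  have hwC : 0 < w * C := by
    apply mul_pos _ hCpos
    rw [hw]
    apply div_pos <;> [linarith; positivity]
  have hηw : η * C ≤ w * C := mul_le_mul_of_nonneg_right hηq hCpos.le
  have low : (p + 7 * w) * C ≤ (H'.deg v : ℝ) := by linarith
  have up : dN r n' F + (1-π)/(4*m) * C' ≤ (p + 5 * w) * C := by
    rw [ewp]
    have q1 : (π + η) * C' + (4 * w + (p - π)/(4*m)) * C' ≤ (p + η + 4 * w) * C' := by
      have := mul_le_mul_of_nonneg_right hpm hC'0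
      linarith
    have q2 : (p + η + 4 * w) * C' ≤ (p + η + 4 * w) * C :=
      mul_le_mul_of_nonneg_left hC'C (by linarith)
    linarith
  linarith


set_option maxHeartbeats 1000000 in
lemma final_ineq {r m n t l b : ℕ} (hr : 2 ≤ r) (hm : 1 ≤ m) {F : HGraph r} {p c η : ℝ}
    (hη : 0 < η) (hηp : η ≤ p) (hηq : η ≤ (1 - p) / (16 * m))
    (hp0 : 0 < p) (hp1 : p < 1) (hn : 2 * r ≤ n)
    (ht2 : (t:ℝ) + 1 ≤ (1 - p) / (64 * r * m^2) * n)
    (hnice : ∀ n' : ℕ, n ≤ 2 * n' → n' ≤ n → NiceAt r m n' F p c η)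
    (hl : l ≤ t) (hb : b ≤ m * (t - l)) :
    b * ((p + (1-p)/(2*m)) * (n.choose (r-1) : ℝ)) + (exN r (n - l - b) F : ℝ)
      + ((n-t).choose r : ℝ) ≤ ((n-l).choose r : ℝ) + exN r (n-t) F := by
  have hm0 : (1:ℝ) ≤ m := by exact_mod_cast hm
  have hr0 : (2:ℝ) ≤ r := by exact_mod_cast hr
  have hn0 : (0:ℝ) < n := by exact_mod_cast (by omega : 0 < n)
  have ht0 : (0:ℝ) ≤ t := by positivity
  set x : ℝ := (1-p)/(32*r*m) with hx
  have hx0 : 0 ≤ x := by apply div_nonneg <;> [linarith; positivity]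
  have hx1 : x ≤ 1/64 := by
    rw [hx, div_le_div_iff₀ (by positivity) (by norm_num)]
    nlinarith
  have hux : ((m * (t+1) : ℕ) : ℝ) ≤ x * n := by
    have h1 : 2 * m * ((1 - p) / (64 * r * m^2) * n) = x * n := by rw [hx]; field_simp; ring
    have h2 := mul_le_mul_of_nonneg_left ht2 (by positivity : (0:ℝ) ≤ 2 * m)
    rw [h1] at h2
    push_cast
    nlinarith
  have h64 : 64 * (m * (t+1)) ≤ n := by
    have : 64 * ((m * (t+1) : ℕ) : ℝ) ≤ n := by nlinarith
    exact_mod_cast this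
  have hmt : m * (t+1) = m * t + m := by ring
  have htm : t ≤ m * t := Nat.le_mul_of_pos_left t hm
  have hlb : l + b ≤ m * t := by
    have h1 : m * (t - l) + m * l = m * t := by rw [← mul_add]; congr 1; omega
    have h2 : l ≤ m * l := Nat.le_mul_of_pos_left l hm
    omega
  have hnear0 := choose_near n r (m*(t+1)) hr hn (by omega) x hx0 hux
  set w := (1-p)/(16*m) with hw
  have hw0 : 0 ≤ w := by apply div_nonneg <;> [linarith; positivity]
  have ex : 2 * r * x = w := by rw [hx, hw]; field_simp; ring
  have e2 : (1-p)/(2*m) = 8 * w := by rw [hw]; field_simp; ring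
  have e4 : (1-p)/(4*m) = 4 * w := by rw [hw]; field_simp; ring
  have e16 : 16 * m * w = 1 - p := by rw [hw]; field_simp
  rw [ex] at hnear0
  have hnear : ∀ z, n ≤ z + m*(t+1) →
      (1 - w) * (n.choose (r-1) : ℝ) ≤ (z.choose (r-1) : ℝ) := by
    intro z hz
    refine hnear0.trans ?_
    exact_mod_cast Nat.choose_le_choose (r-1) (by omega : n - m*(t+1) ≤ z)
  have hdelta : ∀ z, n - m*t < z → z ≤ n →
      |(exN r z F : ℝ) - (exN r (z-1) F : ℝ) - p * (n.choose (r-1) : ℝ)|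
        ≤ 4 * w * (n.choose (r-1) : ℝ) := by
    intro z hz hzn
    rw [← e4]
    exact delta_near hr hm hp1.le hη hηp hηq (hnice z (by omega) hzn)
      (hnice (z-1) (by omega) (by omega)) (by omega) hzn (hnear (z-2) (by omega))
  have htel := telescope (fun z => (exN r z F : ℝ)) _ _ (n - m*t) n hdelta (n-t) (n-l-b)
    (by omega) (by omega) (by omega) (by omega)
  obtain ⟨s, hs⟩ : ∃ s, t = l + s := Nat.exists_eq_add_of_le hl
  have hcast : ((n - t : ℕ) : ℝ) - ((n - l - b : ℕ) : ℝ) = (b:ℝ) - s := by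
    rw [Nat.cast_sub (by omega), Nat.sub_sub, Nat.cast_sub (by omega), hs]
    push_cast; ring
  rw [hcast] at htel
  have hb' : (b:ℝ) ≤ m * s := by
    have : b ≤ m * s := by rwa [hs, Nat.add_sub_cancel_left] at hb
    exact_mod_cast this
  have hs0 : (0:ℝ) ≤ s := by positivity
  have hb0 : (0:ℝ) ≤ b := by positivity
  have habs : |(b:ℝ) - s| ≤ m * s := by
    rw [abs_le]; constructor <;> nlinarith
  have hadd := choose_add_lower (n-t) (r-1) s
  have e5 : r - 1 + 1 = r := by omega
  have e6 : n - t + s = n - l := by omega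
  rw [e5, e6] at hadd
  have hadd' : ((n-t).choose r : ℝ) + s * ((n-t).choose (r-1) : ℝ) ≤ ((n-l).choose r : ℝ) := by
    exact_mod_cast hadd
  have hnt := hnear (n-t) (by omega)
  rw [e2]
  set C := (n.choose (r-1) : ℝ) with hC
  have hC0 : 0 ≤ C := by positivity
  have hwC : 0 ≤ 4 * w * C := by positivity
  have q1 : -(m * s * (4 * w * C)) ≤
      (exN r (n-t) F : ℝ) - exN r (n-l-b) F - ((b:ℝ) - s) * (p * C) := by
    have h1 := (abs_le.1 htel).1
    have h2 := mul_le_mul_of_nonneg_right habs hwC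
    linarith
  have q2 : s * ((1 - w) * C) ≤ s * ((n-t).choose (r-1) : ℝ) :=
    mul_le_mul_of_nonneg_left hnt hs0
  have q3 : b * (8 * w * C) ≤ m * s * (8 * w * C) :=
    mul_le_mul_of_nonneg_right hb' (by positivity)
  have q4 : 0 ≤ s * C * (w * (4 * m - 1)) :=
    mul_nonneg (mul_nonneg hs0 hC0) (mul_nonneg hw0 (by linarith))
  have q5 : s * C * (16 * m * w) = s * C * (1 - p) := by rw [e16]
  linarith


lemma nice_eventually {r m : ℕ} {F : HGraph r} {π c η : ℝ} (hη : 0 < η)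
    (hπ : HasTuranDensity r F π)
    (hcond : ∀ᶠ n : ℕ in atTop,
      BoundedAt r n F (c * (n.choose (r-1) : ℝ)) ((1 - π) / (4 * m) * (n.choose (r-1) : ℝ)) ∧
      SmoothAt r n F ((1 - π) / (8 * m) * (n.choose (r-1) : ℝ))) :
    ∀ᶠ n : ℕ in atTop, NiceAt r m n F π c η := by
  have h1 := hπ.eventually (gt_mem_nhds (by linarith : π < π + η))
  have h2 := hπ.eventually (lt_mem_nhds (by linarith : π - η < π))
  filter_upwards [h1, h2, hcond, eventually_ge_atTop r] with n h1 h2 h3 hn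
  have hpos : (0:ℝ) < (n.choose r : ℝ) := by exact_mod_cast Nat.choose_pos hn
  rw [div_lt_iff₀ hpos] at h1
  rw [lt_div_iff₀ hpos] at h2
  exact ⟨h2.le, h1.le, h3.1, h3.2⟩

lemma dominated {r : ℕ} {F G : HGraph r} {x y : ℝ} (hF : HasTuranDensity r F x)
    (hG : HasTuranDensity r G y) (hxy : x < y) : ∀ᶠ n : ℕ in atTop, exN r n F ≤ exN r n G := by
  have h1 := hF.eventually_lt hG hxy
  filter_upwards [h1, eventually_ge_atTop r] with n h1 hn
  have hpos : (0:ℝ) < (n.choose r : ℝ) := by exact_mod_cast Nat.choose_pos hn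
  rw [div_lt_div_iff_of_pos_right hpos] at h1
  exact_mod_cast h1.le


/-- the extension of the main theorem to vertex-disjoint unions of
different hypergraphs. -/
theorem statement_18 (m r k : ℕ) (hr : 2 ≤ r) (hrm : r ≤ m) (hk : 1 ≤ k)
    (F : Fin k → HGraph r) (hFv : ∀ i, (F i).verts.card ≤ m)
    (π : Fin k → ℝ)
    (hπ : ∀ i, HasTuranDensity r (F i) (π i)) (hπ0 : ∀ i, 0 < π i)
    (c : ℝ) (hc : 0 < c)
    (hcond : ∀ i, ∀ᶠ n : ℕ in atTop,
      BoundedAt r n (F i) (c * (n.choose (r-1) : ℝ))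
        ((1 - π i) / (4 * m) * (n.choose (r-1) : ℝ)) ∧
      SmoothAt r n (F i) ((1 - π i) / (8 * m) * (n.choose (r-1) : ℝ))) :
    ∃ N₀ : ℕ, ∀ n : ℕ, N₀ ≤ n → ∀ t : ℕ, ∀ ts : Fin k → ℕ,
      (∑ i, ts i) = t + 1 →
      ((t : ℝ) + 1) ≤
        min (c / (4 * Real.exp 1 * r * m)) (⨅ i, (1 - π i) / (64 * r * m ^ 2)) * n →
      exMixedN r k F ts n ≤
        n.choose r - (n - t).choose r + Finset.univ.sup (fun i => exN r (n - t) (F i)) ∧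
      (Finset.univ.sup (fun i => exN r (n - t) (F i)) = exFamN r k F (n - t) →
        exMixedN r k F ts n =
          n.choose r - (n - t).choose r + Finset.univ.sup (fun i => exN r (n - t) (F i))) := by
  classical
  have hm : 1 ≤ m := by omega
  have hm0 : (1:ℝ) ≤ m := by exact_mod_cast hm
  have hr0 : (2:ℝ) ≤ r := by exact_mod_cast hr
  haveI : Nonempty (Fin k) := ⟨⟨0, hk⟩⟩
  obtain ⟨j0, hj0⟩ := Finite.exists_max π
  set p := π j0 with hp
  have hp0 : 0 < p := hπ0 j0
  have heps : min (c / (4 * Real.exp 1 * r * m)) (⨅ i, (1 - π i) / (64 * r * m ^ 2)) ≤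
      (1 - p) / (64 * r * m^2) :=
    (min_le_right _ _).trans (ciInf_le (Set.finite_range _).bddBelow j0)
  by_cases hp1 : p < 1
  swap
  · refine ⟨0, fun n _ t ts _ hle => ?_⟩
    exfalso
    have h1 : (1 - p) / (64 * r * m^2) ≤ 0 :=
      div_nonpos_of_nonpos_of_nonneg (by linarith) (by positivity)
    have h2 := hle.trans (mul_le_mul_of_nonneg_right (heps.trans h1) (Nat.cast_nonneg n))
    have : (0:ℝ) ≤ t := by positivity
    linarith
  obtain ⟨η, hη, hηc, hηq, hηp⟩ : ∃ η : ℝ, 0 < η ∧ η ≤ c / 10 ∧ η ≤ (1 - p) / (16 * m) ∧ η ≤ p := by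
    have hq : 0 < (1 - p) / (16 * m) := div_pos (by linarith) (by positivity)
    refine ⟨min (c/10) (min ((1-p)/(16*m)) p), by positivity, min_le_left _ _,
      (min_le_right _ _).trans (min_le_left _ _), (min_le_right _ _).trans (min_le_right _ _)⟩
  have hdom : ∀ i, ∃ j, π j = p ∧ ∀ᶠ n : ℕ in atTop, exN r n (F i) ≤ exN r n (F j) := by
    intro i
    rcases (hj0 i).lt_or_eq with h | h
    · exact ⟨j0, rfl, dominated (hπ i) (hπ j0) h⟩
    · exact ⟨i, h, Eventually.of_forall fun _ => le_rfl⟩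
  choose J hJp hJ using hdom
  have hev : ∀ᶠ n : ℕ in atTop, (∀ i, NiceAt r m n (F i) (π i) c η) ∧
      ∀ i, exN r n (F i) ≤ exN r n (F (J i)) := by
    refine Eventually.and ?_ ?_
    · exact eventually_all.2 fun i => nice_eventually hη (hπ i) (hcond i)
    · exact eventually_all.2 hJ
  obtain ⟨N, hN⟩ := eventually_atTop.1 hev
  refine ⟨2 * N + 2 * r, fun n hn t ts hts hle => ?_⟩
  have hn0 : (0:ℝ) < n := by exact_mod_cast (by omega : 0 < n)
  have ht1 : (t:ℝ) + 1 ≤ c / (4 * Real.exp 1 * r * m) * n :=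
    hle.trans (mul_le_mul_of_nonneg_right (min_le_left _ _) hn0.le)
  have ht2 : (t:ℝ) + 1 ≤ (1 - p) / (64 * r * m^2) * n :=
    hle.trans (mul_le_mul_of_nonneg_right heps hn0.le)
  have htn : 2 * t ≤ n := by
    have h1 : (1 - p) / (64 * r * m^2) ≤ 1/2 := by
      rw [div_le_div_iff₀ (by positivity) (by norm_num)]
      have : (1:ℝ) ≤ r * m^2 := by nlinarith [sq_nonneg ((m:ℝ) - 1)]
      nlinarith
    have h2 := ht2.trans (mul_le_mul_of_nonneg_right h1 hn0.le)
    have : 2 * (t:ℝ) ≤ n := by linarith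
    exact_mod_cast this
  have hnice : ∀ i, ∀ n' : ℕ, n ≤ 2 * n' → n' ≤ n → NiceAt r m n' (F i) (π i) c η :=
    fun i n' h _ => (hN n' (by omega)).1 i
  have hupper : exMixedN r k F ts n ≤
      n.choose r - (n - t).choose r + Finset.univ.sup (fun i => exN r (n - t) (F i)) := by
    apply csSup_le'
    rintro _ ⟨H, hHn, hHfree, rfl⟩
    by_contra hbig
    push Not at hbig
    have hchle : (n-t).choose r ≤ n.choose r := Nat.choose_le_choose r (by omega)
    have hbig' : ∀ j, (n.choose r : ℝ) - ((n-t).choose r : ℝ) + exN r (n-t) (F j) <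
        (H.edges.card : ℝ) := by
      intro j
      have h1 : exN r (n-t) (F j) ≤ Finset.univ.sup (fun i => exN r (n - t) (F i)) :=
        Finset.le_sup (f := fun i => exN r (n - t) (F i)) (Finset.mem_univ j)
      have h2 : n.choose r - (n-t).choose r + exN r (n-t) (F j) < H.edges.card := by omega
      rw [← Nat.cast_sub hchle]
      exact_mod_cast h2
    have hHlo : (p - η) * (n.choose r : ℝ) ≤ H.edges.card := by
      have h1 := (hnice j0 (n-t) (by omega) (by omega)).lo
      have h2 := hbig' j0
      have h3 : ((n-t).choose r : ℝ) ≤ (n.choose r : ℝ) := by exact_mod_cast hchle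
      rw [← hp] at h1
      have h4 : 0 ≤ (1 - (p - η)) * ((n.choose r : ℝ) - ((n-t).choose r : ℝ)) :=
        mul_nonneg (by linarith) (by linarith)
      linarith
    obtain ⟨e, τ, hτ⟩ := exists_types hts
    rcases core (t := t) (τ := τ) (H := H) (T := (p + (1-p)/(2*m)) * (n.choose (r-1) : ℝ)) hFv
      (fun U hU hUc v hv hvU hdeg i =>
        greedy_cond hr hm hc hη hηc hηq hp0 hp1 (hπ0 i) (hj0 i) (by omega) hHn hHlo ht1 ht2
          (hnice i) hU hUc hv hvU hdeg) with ⟨S, hS⟩ | ⟨l, b, i, hl, hb, hcard⟩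
    · exact hHfree (mixed_of_PM e hτ hS)
    · have hnJ : ∀ n' : ℕ, n ≤ 2 * n' → n' ≤ n → NiceAt r m n' (F (J i)) p c η := by
        intro n' h1 h2
        have := hnice (J i) n' h1 h2
        rwa [hJp i] at this
      have hfin := final_ineq hr hm hη hηp hηq hp0 hp1 (by omega) ht2 hnJ hl hb
      rw [hHn] at hcard
      have hbt : n ≤ 2 * (n - l - b) := by
        have h1 : 2 * m * ((1 - p) / (64 * r * m^2) * n) = (1-p)/(32*r*m) * n := by
          field_simp; ring
        have h2 := mul_le_mul_of_nonneg_left ht2 (by positivity : (0:ℝ) ≤ 2 * m)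
        rw [h1] at h2
        have h3 : (1-p)/(32*r*m) ≤ 1/2 := by
          rw [div_le_div_iff₀ (by positivity) (by norm_num)]
          nlinarith
        have h4 := h2.trans (mul_le_mul_of_nonneg_right h3 hn0.le)
        have h5 : 2 * (m * t) ≤ n := by
          have : 2 * ((m:ℝ) * t) ≤ n := by nlinarith
          exact_mod_cast this
        have h6 : m * (t - l) + m * l = m * t := by rw [← mul_add]; congr 1; omega
        have h7 : l ≤ m * l := Nat.le_mul_of_pos_left l hm
        omega
      have hd := (hN (n-l-b) (by omega)).2 i
      have hd' : (exN r (n-l-b) (F i) : ℝ) ≤ exN r (n-l-b) (F (J i)) := by exact_mod_cast hd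
      have h1 := hbig' (J i)
      rw [Nat.cast_sub (Nat.choose_le_choose r (by omega))] at hcard
      linarith
  refine ⟨hupper, fun heq => le_antisymm hupper ?_⟩
  rw [heq]
  exact lower_bound hts (by omega) (fun i => edges_nonempty_of_density (hπ i) (hπ0 i))


end DensityCH
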